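/- arXiv:1409.2333 — 2 statements merged into one kernel-verified Lean document; each statement's English description precedes it below -/
import Mathlib

section
/- Let n be an odd positive integer. There exists θ_c > 0 such that for every θ with 0 < θ < θ_c, the nodal set N(Φ^θ_n) is nonempty and connected, the gradient of Φ^θ_n vanishes nowhere on N(Φ^θ_n) (so the nodal set is a regular simple curve), and ℝ² \ N(Φ^θ_n) has exactly two connected components, i.e. Φ^θ_n has exactly two nodal domains. -/
/-- The physicist's Hermite polynomials: `H 0 = 1`, `H 1 = 2X`,
`H (n+2) = 2X · H (n+1) - 2(n+1) · H n`. -/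
noncomputable def H : ℕ → Polynomial ℝ
  | 0 => 1
  | 1 => Polynomial.C 2 * Polynomial.X
  | n + 2 => Polynomial.C 2 * Polynomial.X * H (n + 1) - Polynomial.C (2 * (n + 1) : ℝ) * H n

/-- The eigenfunction `Φ^θ_n(x,y) = (cos θ · H_n(x) + sin θ · H_n(y)) e^{-(x²+y²)/2}`. -/
noncomputable def Phi (n : ℕ) (θ : ℝ) : ℝ × ℝ → ℝ := fun p =>
  (Real.cos θ * (H n).eval p.1 + Real.sin θ * (H n).eval p.2) *
    Real.exp (-(p.1 ^ 2 + p.2 ^ 2) / 2)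

/-- The nodal set of `Φ^θ_n`. -/
noncomputable def nodalSet (n : ℕ) (θ : ℝ) : Set (ℝ × ℝ) := {p | Phi n θ p = 0}

/-- The number of nodal domains: the number of connected components of the
complement of the nodal set. -/
noncomputable def numNodalDomains (n : ℕ) (θ : ℝ) : ℕ :=
  {C : Set (ℝ × ℝ) | ∃ p, Phi n θ p ≠ 0 ∧
    C = connectedComponentIn {q : ℝ × ℝ | Phi n θ q ≠ 0} p}.ncard

/-! For small `θ`, up to a positive factor, `Φ^θ_n` is `H_n(x) + ε H_n(y)` with `ε = tan θ` small
and positive. Zeros of `H_n` are simple, so its critical values stay a distance `m > 0` away from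
`0`, while `|ε H_n(y)| < m` for all `y` in an interval beyond which `H_n` is increasing. Hence no
zero is singular, and every point of the positive set can be moved within it: first in `y` into
that interval or above it, and from the interval in `x` to where `H_n(x) ≥ m`, because `H_n` cannot
turn between the levels `-m` and `m`; from there and from above the interval, one goes up in `y`
until `x` can be moved freely. So the positive set is connected, and by oddness so is the negative
one: these are the two nodal domains. The nodal set is the intersection of their closures, which
cover `ℝ²`, and it is connected because `ℝ²` is unicoherent. -/

open Filter Set Topology

section Unicoherence

variable {X : Type*} [TopologicalSpace X]

lemma exists_continuousMap_eqOn_of_union_eq_univ {Y : Type*} [TopologicalSpace Y] {A B : Set X}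
    (hA : IsClosed A) (hB : IsClosed B) (hAB : A ∪ B = univ) {f g : X → Y} (hf : Continuous f)
    (hg : Continuous g) (hfg : EqOn f g (A ∩ B)) : ∃ h : C(X, Y), EqOn h f A ∧ EqOn h g B := by
  classical
  have hcont : Continuous (A.piecewise f g) := by
    refine hf.piecewise (fun p hp ↦ hfg ⟨hA.frontier_subset hp, ?_⟩) hg
    exact closure_minimal (compl_subset_iff_union.2 hAB) hB
      (frontier_eq_closure_inter_closure.subset hp).2
  refine ⟨⟨_, hcont⟩, piecewise_eqOn A f g, fun p hp ↦ ?_⟩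
  by_cases hpA : p ∈ A
  · exact (piecewise_eqOn A f g hpA).trans (hfg ⟨hpA, hp⟩)
  · exact piecewise_eqOn_compl A f g hpA

/- If `A ∩ B = u ⊔ v`, the map equal to `g` on `A` and to `-g` on `B`, where `g` is `0` on `u` and
`1` on `v`, is continuous modulo `2`. A real lift of it is `g` on `A` and `-g` on `B`, which is
impossible on `v`. -/
theorem isPreconnected_inter_of_union_eq_univ [SimplyConnectedSpace X]
    [LocallyPathConnectedSpace X] [NormalSpace X] {A B : Set X} (hA : IsClosed A) (hB : IsClosed B)
    (hAc : IsPreconnected A) (hBc : IsPreconnected B) (hAB : A ∪ B = univ) :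
    IsPreconnected (A ∩ B) := by
  rw [isPreconnected_iff_subset_of_fully_disjoint_closed (hA.inter hB)]
  intro u v hu hv huv hdisj
  by_contra! ⟨hnu, hnv⟩
  obtain ⟨b, hb, hbu⟩ := not_subset.1 hnu
  obtain ⟨a, ha, hav⟩ := not_subset.1 hnv
  have hau : a ∈ u := (huv ha).resolve_right hav
  have hbv : b ∈ v := (huv hb).resolve_left hbu
  obtain ⟨g, hg0, hg1, -⟩ := exists_continuous_zero_one_of_isClosed hu hv hdisj
  have hglue : EqOn (fun p ↦ (g p : AddCircle (2 : ℝ))) (fun p ↦ (-g p : ℝ)) (A ∩ B) := by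
    intro p hp
    change (g p : AddCircle (2 : ℝ)) = (-g p : ℝ)
    rcases huv hp with h | h
    · simp [hg0 h]
    · rw [hg1 h, ← sub_eq_zero, ← AddCircle.coe_sub, AddCircle.coe_eq_zero_iff]
      exact ⟨1, by norm_num⟩
  obtain ⟨w, hwA, hwB⟩ := exists_continuousMap_eqOn_of_union_eq_univ hA hB hAB
    ((AddCircle.continuous_mk' 2).comp g.continuous)
    ((AddCircle.continuous_mk' 2).comp g.continuous.neg) hglue
  have hcov := AddCircle.isCoveringMap_coe (2 : ℝ)
  obtain ⟨L, ⟨hLa, hL⟩, -⟩ := hcov.existsUnique_continuousMap_lifts w a (g a) (hwA ha.1).symm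
  have hga : g a = 0 := hg0 hau
  have hLA : EqOn L g A := hcov.eqOn_of_comp_eqOn hAc (by fun_prop) (by fun_prop)
    (fun p hp ↦ (congrFun hL p).trans (hwA hp)) ha.1 hLa
  have hLB : EqOn L (-g) B := hcov.eqOn_of_comp_eqOn hBc (by fun_prop) (by fun_prop)
    (fun p hp ↦ (congrFun hL p).trans (hwB hp)) ha.2 (by simp [hLa, hga])
  have hgb : g b = 1 := hg1 hbv
  have : g b = -g b := (hLA hb.1).symm.trans (hLB hb.2)
  linarith

end Unicoherence

section NodalDomains

variable {X : Type*} [TopologicalSpace X] {f : X → ℝ}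

lemma connectedComponentIn_ne_zero_of_pos (hf : Continuous f) (hpos : IsPreconnected {p | 0 < f p})
    {p : X} (hp : 0 < f p) : connectedComponentIn {q | f q ≠ 0} p = {q | 0 < f q} := by
  refine Subset.antisymm (fun q hq ↦ ?_)
    (hpos.subset_connectedComponentIn hp fun q (hq : 0 < f q) ↦ hq.ne')
  by_contra hq'
  obtain ⟨c, hc, hc0⟩ := isPreconnected_connectedComponentIn.intermediate_value hq
    (mem_connectedComponentIn hp.ne') hf.continuousOn ⟨not_lt.1 hq', hp.le⟩
  exact connectedComponentIn_subset _ _ hc hc0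

lemma connectedComponentIn_ne_zero_of_neg (hf : Continuous f) (hneg : IsPreconnected {p | f p < 0})
    {p : X} (hp : f p < 0) : connectedComponentIn {q | f q ≠ 0} p = {q | f q < 0} := by
  simpa using connectedComponentIn_ne_zero_of_pos hf.neg (by simpa using hneg) (by simpa using hp)

theorem ncard_connectedComponentIn_ne_zero (hf : Continuous f) (hpos : IsConnected {p | 0 < f p})
    (hneg : IsConnected {p | f p < 0}) :
    {C : Set X | ∃ p, f p ≠ 0 ∧ C = connectedComponentIn {q | f q ≠ 0} p}.ncard = 2 := by
  obtain ⟨a, ha⟩ := hpos.nonempty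
  obtain ⟨b, hb⟩ := hneg.nonempty
  have hcompPos {p} := connectedComponentIn_ne_zero_of_pos (p := p) hf hpos.isPreconnected
  have hcompNeg {p} := connectedComponentIn_ne_zero_of_neg (p := p) hf hneg.isPreconnected
  have hcomponents : {C : Set X | ∃ p, f p ≠ 0 ∧ C = connectedComponentIn {q | f q ≠ 0} p} =
      {{q | 0 < f q}, {q | f q < 0}} := by
    ext C
    constructor
    · rintro ⟨p, hp, rfl⟩
      exact hp.gt_or_lt.imp hcompPos hcompNeg
    · rintro (rfl | rfl)
      · exact ⟨a, ne_of_gt ha, (hcompPos ha).symm⟩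
      · exact ⟨b, ne_of_lt hb, (hcompNeg hb).symm⟩
  have hne : {q | 0 < f q} ≠ {q | f q < 0} := fun h ↦
    lt_asymm (show 0 < f a from ha) (show a ∈ {q | f q < 0} from h ▸ ha)
  rw [hcomponents, ncard_pair hne]

lemma isConnected_setOf_neg_of_odd {E : Type*} [TopologicalSpace E] [AddGroup E] [ContinuousNeg E]
    {f : E → ℝ} (hodd : f.Odd) (hpos : IsConnected {p | 0 < f p}) : IsConnected {p | f p < 0} := by
  convert hpos.image (fun p ↦ -p) continuous_neg.continuousOn using 1
  ext p
  simp [hodd p]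

end NodalDomains

section RegularZeroSet

variable {E : Type*} [NormedAddCommGroup E] [NormedSpace ℝ E] {f : E → ℝ}

lemma mem_closure_setOf_pos_of_fderiv_ne_zero {p : E} (hp : f p = 0) (hreg : fderiv ℝ f p ≠ 0) :
    p ∈ closure {q | 0 < f q} := by
  contrapose! hreg
  rw [mem_closure_iff_frequently, not_frequently] at hreg
  refine IsLocalMax.fderiv_eq_zero ?_
  filter_upwards [hreg] with q hq
  rw [hp]
  exact not_lt.1 hq

lemma isPreconnected_setOf_nonneg (hpos : IsPreconnected {p | 0 < f p})
    (hreg : ∀ p, f p = 0 → fderiv ℝ f p ≠ 0) : IsPreconnected {p | 0 ≤ f p} :=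
  hpos.subset_closure (fun _ (hp : 0 < f _) ↦ hp.le) fun p (hp : 0 ≤ f p) ↦ hp.eq_or_lt.elim
    (fun h ↦ mem_closure_setOf_pos_of_fderiv_ne_zero h.symm (hreg p h.symm))
    (fun h ↦ subset_closure h)

theorem isConnected_setOf_eq_zero (hf : Continuous f) (hpos : IsConnected {p | 0 < f p})
    (hneg : IsConnected {p | f p < 0}) (hreg : ∀ p, f p = 0 → fderiv ℝ f p ≠ 0) :
    IsConnected {p | f p = 0} := by
  have hnonneg : IsPreconnected {p | 0 ≤ f p} := isPreconnected_setOf_nonneg hpos.2 hreg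
  have hnonpos : IsPreconnected {p | f p ≤ 0} := by
    simpa using isPreconnected_setOf_nonneg (f := fun p ↦ -f p) (by simpa using hneg.2)
      (by simpa [fderiv_fun_neg] using hreg)
  have hinter : {p | f p = 0} = {p | f p ≤ 0} ∩ {p | 0 ≤ f p} := by
    ext p
    exact le_antisymm_iff
  constructor
  · exact mem_range_of_exists_le_of_exists_ge hf (hneg.1.imp fun _ ↦ le_of_lt)
      (hpos.1.imp fun _ ↦ le_of_lt)
  · rw [hinter]
    exact isPreconnected_inter_of_union_eq_univ (isClosed_le hf continuous_const)
      (isClosed_le continuous_const hf) hnonpos hnonneg (eq_univ_of_forall fun p ↦ le_total (f p) 0)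

end RegularZeroSet

section Ascent

/-- From every point above level `a`, a path along which `f` never drops below its starting value
leads to a point at level at least `b`. This is how the absence of critical values between `a` and
`b` enters the connectedness argument. -/
def Ascends {X : Type*} [TopologicalSpace X] (f : X → ℝ) (a b : ℝ) : Prop :=
  ∀ x, a < f x → ∃ y, b ≤ f y ∧ JoinedIn {z | f x ≤ f z} x y

variable {f : ℝ → ℝ} {m : ℝ}

lemma exists_deriv_eq_zero_of_deriv_pos {a b : ℝ} (hf : ContinuousOn f (Icc a b)) (hab : a < b)
    (ha : 0 < deriv f a) (hba : f b ≤ f a) : ∃ c ∈ Ioo a b, deriv f c = 0 ∧ f a ≤ f c := by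
  have hright : ∀ᶠ x in 𝓝[>] a, f a < f x := by
    have hsign := eventually_nhdsWithin_sign_eq_of_deriv_pos (f := fun x ↦ f x - f a) (x₀ := a)
      (by simpa using ha) (sub_self _)
    filter_upwards [nhdsWithin_le_nhds hsign, self_mem_nhdsWithin] with x hx (hax : a < x)
    rwa [sign_pos (sub_pos.2 hax), sign_eq_one_iff, sub_pos] at hx
  obtain ⟨d, had, hd⟩ := (hright.and (Ioc_mem_nhdsGT hab)).exists
  obtain ⟨c, hc, hmax⟩ := isCompact_Icc.exists_isMaxOn (nonempty_Icc.2 hab.le) hf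
  have hac : f a < f c := had.trans_le (hmax (Ioc_subset_Icc_self hd))
  have hc' : c ∈ Ioo a b :=
    ⟨hc.1.lt_of_ne fun h ↦ hac.ne (h ▸ rfl), hc.2.lt_of_ne fun h ↦ hba.not_gt (h ▸ hac)⟩
  exact ⟨c, hc', (hmax.isLocalMax (Icc_mem_nhds hc'.1 hc'.2)).deriv_eq_zero, hac.le⟩

lemma exists_joinedIn_of_deriv_pos (hf : Continuous f) (hcrit : ∀ z, deriv f z = 0 → m ≤ |f z|)
    {x b : ℝ} (hx : -m < f x) (hx' : 0 < deriv f x) (hxb : x ≤ b) (hb : m ≤ f b) :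
    ∃ y, m ≤ f y ∧ JoinedIn {z | f x ≤ f z} x y := by
  obtain ⟨y, ⟨⟨hxy, hyb⟩, hy⟩, hfirst⟩ := (isCompact_Icc.inter_right
    (isClosed_le continuous_const hf)).exists_isLeast ⟨b, ⟨hxb, le_rfl⟩, hb⟩
  refine ⟨y, hy, JoinedIn.of_segment_subset ?_⟩
  rw [segment_eq_Icc hxy]
  intro t ht
  by_contra hlt
  replace hlt : f t < f x := not_le.1 hlt
  have hxt : x < t := ht.1.lt_of_ne fun h ↦ hlt.ne (h ▸ rfl)
  obtain ⟨c, hc, hc0, hxc⟩ :=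
    exists_deriv_eq_zero_of_deriv_pos hf.continuousOn hxt hx' hlt.le
  have hcy : c < y := hc.2.trans_le ht.2
  have hcm : f c < m := by
    by_contra! h
    exact hcy.not_ge (hfirst ⟨⟨hc.1.le, hcy.le.trans hyb⟩, h⟩)
  exact (hcrit c hc0).not_gt (abs_lt.2 ⟨hx.trans_le hxc, hcm⟩)

theorem ascends_of_le_abs_critical_value (hf : Continuous f)
    (hcrit : ∀ z, deriv f z = 0 → m ≤ |f z|) (htop : Tendsto f atTop atTop)
    (hbot : Tendsto f atBot atBot) : Ascends f (-m) m := by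
  intro x hx
  by_cases hxm : m ≤ f x
  · exact ⟨x, hxm, JoinedIn.refl (le_refl (f x))⟩
  have hx' : deriv f x ≠ 0 := fun h ↦ (hcrit x h).not_gt (abs_lt.2 ⟨hx, not_le.1 hxm⟩)
  rcases hx'.gt_or_lt with hpos | hneg
  · obtain ⟨b, hb, hxb⟩ := ((htop.eventually_ge_atTop m).and (eventually_ge_atTop x)).exists
    exact exists_joinedIn_of_deriv_pos hf hcrit hx hpos hxb hb
  · -- Going left `f` increases at first but tends to `-∞`, so it turns at a critical point above
    -- level `-m`, hence above level `m`.
    have hgcrit : ∀ z, deriv (fun t ↦ f (-t)) z = 0 → m ≤ |f (-z)| := fun z hz ↦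
      hcrit (-z) (by simpa [deriv_comp_neg] using hz)
    have hgpos : 0 < deriv (fun t ↦ f (-t)) (-x) := by simpa [deriv_comp_neg] using hneg
    have hgcont : Continuous fun t ↦ f (-t) := by fun_prop
    obtain ⟨a, ha, hax⟩ := ((hbot.eventually_le_atBot (f x)).and (eventually_lt_atBot x)).exists
    obtain ⟨c, hc, hc0, hxc⟩ := exists_deriv_eq_zero_of_deriv_pos (b := -a) hgcont.continuousOn
      (neg_lt_neg hax) hgpos (by simpa using ha)
    rw [neg_neg] at hxc
    have hcm : m ≤ f (-c) := (le_abs'.1 (hgcrit c hc0)).resolve_left (by linarith)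
    obtain ⟨y, hy, hjoin⟩ := exists_joinedIn_of_deriv_pos hgcont hgcrit (by simpa using hx) hgpos
      hc.1.le hcm
    refine ⟨-y, hy, ?_⟩
    simpa [image_neg_eq_neg] using hjoin.map continuous_neg

end Ascent

section SeparatedSum

variable {X : Type*} [TopologicalSpace X] {f : X → ℝ} {g : ℝ → ℝ} {m a b : ℝ}

lemma joinedIn_setOf_pos_add_of_joinedIn {x x' : X} {y : ℝ} (hxy : 0 < f x + g y)
    (h : JoinedIn {z | f x ≤ f z} x x') : JoinedIn {p : X × ℝ | 0 < f p.1 + g p.2} (x, y) (x', y) :=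
  (h.map (f := fun z ↦ (z, y)) (by fun_prop)).mono <| by
    rintro _ ⟨z, hz : f x ≤ f z, rfl⟩
    change 0 < f z + g y
    linarith

lemma joinedIn_setOf_pos_add_of_uIcc {x : X} {y y' : ℝ} (h : ∀ t ∈ uIcc y y', 0 < f x + g t) :
    JoinedIn {p : X × ℝ | 0 < f p.1 + g p.2} (x, y) (x, y') := by
  have hseg : JoinedIn (uIcc y y') y y' := JoinedIn.of_segment_subset (segment_eq_uIcc y y').subset
  refine (hseg.map (f := fun t ↦ (x, t)) (by fun_prop)).mono ?_
  rintro _ ⟨t, ht, rfl⟩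
  exact h t ht

lemma joinedIn_setOf_pos_add_of_ge [PathConnectedSpace X] (hf : Continuous f)
    (hgm : -m < g b) (hmono : MonotoneOn g (Ici b)) (htop : Tendsto g atTop atTop) {x₀ : X}
    (hx₀ : m ≤ f x₀) {x : X} {y : ℝ} (hy : b ≤ y) (hxy : 0 < f x + g y) :
    JoinedIn {p : X × ℝ | 0 < f p.1 + g p.2} (x, y) (x₀, b) := by
  obtain ⟨γ⟩ := PathConnectedSpace.joined x x₀
  obtain ⟨_, ⟨s, rfl⟩, hmin⟩ := (isCompact_range γ.continuous).exists_isMinOn (range_nonempty γ)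
    hf.continuousOn
  obtain ⟨Y, hY, hyY⟩ := ((htop.eventually_gt_atTop (-f (γ s))).and (eventually_ge_atTop y)).exists
  have hup : JoinedIn {p : X × ℝ | 0 < f p.1 + g p.2} (x, y) (x, Y) := by
    refine joinedIn_setOf_pos_add_of_uIcc fun t ht ↦ ?_
    rw [uIcc_of_le hyY] at ht
    linarith [hmono hy (hy.trans ht.1) ht.1]
  have hacross : JoinedIn {p : X × ℝ | 0 < f p.1 + g p.2} (x, Y) (x₀, Y) := by
    refine (JoinedIn.map (F := range γ) ⟨γ, mem_range_self⟩ (f := fun z ↦ (z, Y))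
      (by fun_prop)).mono ?_
    rintro _ ⟨z, hz, rfl⟩
    have : f (γ s) ≤ f z := hmin hz
    change 0 < f z + g Y
    linarith
  have hdown : JoinedIn {p : X × ℝ | 0 < f p.1 + g p.2} (x₀, Y) (x₀, b) := by
    refine joinedIn_setOf_pos_add_of_uIcc fun t ht ↦ ?_
    rw [uIcc_of_ge (hy.trans hyY)] at ht
    linarith [hmono self_mem_Ici ht.1 ht.1]
  exact (hup.trans hacross).trans hdown

theorem isPathConnected_setOf_pos_add [PathConnectedSpace X] (hf : Continuous f)
    (hasc : Ascends f (-m) m) {x₀ : X} (hx₀ : m ≤ f x₀) (hab : a ≤ b)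
    (hgm : ∀ y ∈ Icc a b, |g y| < m) (hleft : MonotoneOn g (Iic a)) (hright : MonotoneOn g (Ici b))
    (htop : Tendsto g atTop atTop) : IsPathConnected {p : X × ℝ | 0 < f p.1 + g p.2} := by
  have hgm' : ∀ y ∈ Icc a b, -m < g y ∧ g y < m := fun y hy ↦ abs_lt.1 (hgm y hy)
  have hgb : -m < g b := (hgm' b ⟨hab, le_rfl⟩).1
  have joined_of_ge {x y} := joinedIn_setOf_pos_add_of_ge (x := x) (y := y) hf hgb hright htop hx₀
  have joined_of_mem_Icc {x y} (hy : y ∈ Icc a b) (hxy : 0 < f x + g y) :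
      JoinedIn {p : X × ℝ | 0 < f p.1 + g p.2} (x, y) (x₀, b) := by
    obtain ⟨x', hx', hjoin⟩ := hasc x (by linarith [hgm' y hy])
    have hvert : ∀ t ∈ uIcc y b, 0 < f x' + g t := fun t ht ↦ by
      rw [uIcc_of_le hy.2] at ht
      linarith [hgm' t ⟨hy.1.trans ht.1, ht.2⟩]
    exact ((joinedIn_setOf_pos_add_of_joinedIn hxy hjoin).trans
      (joinedIn_setOf_pos_add_of_uIcc hvert)).trans
      (joined_of_ge le_rfl (hvert b right_mem_uIcc))
  refine ⟨(x₀, b), show 0 < f x₀ + g b by linarith, ?_⟩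
  rintro ⟨x, y⟩ (hxy : 0 < f x + g y)
  refine JoinedIn.symm ?_
  rcases le_total b y with hby | hyb
  · exact joined_of_ge hby hxy
  rcases le_total a y with hay | hya
  · exact joined_of_mem_Icc ⟨hay, hyb⟩ hxy
  have hvert : ∀ t ∈ uIcc y a, 0 < f x + g t := fun t ht ↦ by
    rw [uIcc_of_le hya] at ht
    linarith [hleft hya ht.2 ht.1]
  exact (joinedIn_setOf_pos_add_of_uIcc hvert).trans
    (joined_of_mem_Icc ⟨le_rfl, hab⟩ (hvert a right_mem_uIcc))

lemma deriv_eq_zero_of_fderiv_add_eq_zero {f g : ℝ → ℝ} (hf : Differentiable ℝ f)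
    (hg : Differentiable ℝ g) {p : ℝ × ℝ}
    (hp : fderiv ℝ (fun q : ℝ × ℝ ↦ f q.1 + g q.2) p = 0) :
    deriv f p.1 = 0 ∧ deriv g p.2 = 0 := by
  have hsum := ((hf p.1).hasDerivAt.hasFDerivAt.comp p hasFDerivAt_fst).add
    ((hg p.2).hasDerivAt.hasFDerivAt.comp p hasFDerivAt_snd)
  have hzero := hsum.fderiv.symm.trans hp
  constructor
  · simpa using DFunLike.congr_fun hzero (1, 0)
  · simpa using DFunLike.congr_fun hzero (0, 1)

end SeparatedSum

section SmallPerturbation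

variable {f g : ℝ → ℝ} {m : ℝ}

lemma exists_pos_le_abs_critical_value (hf : Continuous f) (hf' : Continuous (deriv f))
    (hcpt : ∀ᶠ x in cocompact ℝ, deriv f x ≠ 0) (hreg : ∀ z, deriv f z = 0 → f z ≠ 0) :
    ∃ m, 0 < m ∧ ∀ z, deriv f z = 0 → m ≤ |f z| := by
  obtain ⟨K, hK, hKf⟩ := mem_cocompact.1 hcpt
  have hcrit : IsCompact {z | deriv f z = 0} :=
    hK.of_isClosed_subset (isClosed_eq hf' continuous_const) fun z hz ↦ by
      by_contra hzK
      exact hKf hzK hz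
  exact hcrit.exists_forall_le' hf.abs.continuousOn fun z hz ↦ abs_pos.2 (hreg z hz)

lemma eventually_forall_abs_mul_lt {Y : Type*} [TopologicalSpace Y] {g : Y → ℝ} {K : Set Y}
    (hK : IsCompact K) (hg : Continuous g) (hm : 0 < m) :
    ∀ᶠ ε in 𝓝 (0 : ℝ), ∀ y ∈ K, |ε * g y| < m := by
  refine hK.eventually_forall_of_forall_eventually fun y _ ↦ ?_
  have hcont : Continuous fun z : ℝ × Y ↦ |z.1 * g z.2| := by fun_prop
  exact hcont.continuousAt.eventually_lt_const (by simpa using hm)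

theorem eventually_isPathConnected_setOf_pos_add_mul {X : Type*} [TopologicalSpace X]
    [PathConnectedSpace X] {f : X → ℝ} (hf : Continuous f) (hm : 0 < m) (hasc : Ascends f (-m) m)
    {x₀ : X} (hx₀ : m ≤ f x₀) (hg : Continuous g) (hg' : ∀ᶠ y in cocompact ℝ, 0 < deriv g y)
    (htop : Tendsto g atTop atTop) :
    ∀ᶠ ε in 𝓝[>] (0 : ℝ), IsPathConnected {p : X × ℝ | 0 < f p.1 + ε * g p.2} := by
  rw [cocompact_eq_atBot_atTop, eventually_sup] at hg'
  obtain ⟨a, ha⟩ := eventually_atBot.1 hg'.1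
  obtain ⟨b, hb⟩ := eventually_atTop.1 (hg'.2.and (eventually_ge_atTop a))
  have hleft : MonotoneOn g (Iic a) := (strictMonoOn_of_deriv_pos (convex_Iic a) hg.continuousOn
    fun y hy ↦ ha y (interior_subset hy : y ∈ Iic a)).monotoneOn
  have hright : MonotoneOn g (Ici b) := (strictMonoOn_of_deriv_pos (convex_Ici b) hg.continuousOn
    fun y hy ↦ (hb y (interior_subset hy : y ∈ Ici b)).1).monotoneOn
  filter_upwards [self_mem_nhdsWithin, nhdsWithin_le_nhds
    (eventually_forall_abs_mul_lt (isCompact_Icc (a := a) (b := b)) hg hm)] with ε (hε : 0 < ε) hεg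
  have hmul : Monotone (ε * · : ℝ → ℝ) := monotone_mul_left_of_nonneg hε.le
  exact isPathConnected_setOf_pos_add (g := fun y ↦ ε * g y) hf hasc hx₀ (hb b le_rfl).2 hεg
    (hmul.comp_monotoneOn hleft) (hmul.comp_monotoneOn hright) (htop.const_mul_atTop hε)

/- At a singular zero `p` of `f + ε g`, `p.1` is critical for `f` and `p.2` for `g`; then
`|f p.1| = |ε g p.2|` is small, but critical values of `f` are not. -/
theorem eventually_fderiv_add_mul_ne_zero (hf : Differentiable ℝ f) (hg : Differentiable ℝ g)
    (hm : 0 < m) (hcrit : ∀ z, deriv f z = 0 → m ≤ |f z|)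
    (hg' : ∀ᶠ y in cocompact ℝ, deriv g y ≠ 0) :
    ∀ᶠ ε in 𝓝[≠] (0 : ℝ), ∀ p : ℝ × ℝ, f p.1 + ε * g p.2 = 0 →
      fderiv ℝ (fun q : ℝ × ℝ ↦ f q.1 + ε * g q.2) p ≠ 0 := by
  obtain ⟨K, hK, hKg⟩ := mem_cocompact.1 hg'
  filter_upwards [self_mem_nhdsWithin, nhdsWithin_le_nhds
    (eventually_forall_abs_mul_lt hK hg.continuous hm)] with ε hε hεg p hp hsing
  obtain ⟨hfp, hgp⟩ := deriv_eq_zero_of_fderiv_add_eq_zero hf (hg.const_mul ε) hsing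
  have hgp : deriv g p.2 = 0 := by
    rw [deriv_const_mul_field] at hgp
    exact (mul_eq_zero.1 hgp).resolve_left hε
  have hpK : p.2 ∈ K := by
    by_contra hpK
    exact hKg hpK hgp
  have hfg : |f p.1| = |ε * g p.2| := by rw [eq_neg_of_add_eq_zero_left hp, abs_neg]
  exact (hcrit p.1 hfp).not_gt (hfg ▸ hεg p.2 hpK)

end SmallPerturbation

section Hermite

lemma eval_H_add_two (n : ℕ) (x : ℝ) :
    (H (n + 2)).eval x = 2 * x * (H (n + 1)).eval x - 2 * (n + 1) * (H n).eval x := by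
  simp [H]

lemma derivative_H_succ (n : ℕ) :
    (H (n + 1)).derivative = Polynomial.C (2 * (n + 1) : ℝ) * H n := by
  induction n using Nat.twoStepInduction with
  | zero => simp [H]
  | one => simp [H]; ring
  | more n ih₀ ih₁ =>
    rw [H]
    simp only [Polynomial.derivative_sub, Polynomial.derivative_mul, Polynomial.derivative_C,
      Polynomial.derivative_X, ih₀, ih₁]
    rw [H]
    simp only [map_mul, map_add, map_one, map_ofNat, Nat.cast_add, Nat.cast_one, Nat.cast_ofNat]
    ring

lemma deriv_eval_H_succ (n : ℕ) (x : ℝ) :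
    deriv (fun t ↦ (H (n + 1)).eval t) x = 2 * (n + 1) * (H n).eval x := by
  simp [derivative_H_succ]

lemma eval_H_neg (n : ℕ) (x : ℝ) : (H n).eval (-x) = (-1) ^ n * (H n).eval x := by
  induction n using Nat.twoStepInduction with
  | zero => simp [H]
  | one => simp [H]
  | more n ih₀ ih₁ => rw [eval_H_add_two, eval_H_add_two, ih₀, ih₁]; ring

lemma eval_H_neg_of_odd {n : ℕ} (hn : Odd n) (x : ℝ) : (H n).eval (-x) = -(H n).eval x := by
  rw [eval_H_neg, hn.neg_one_pow, neg_one_mul]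

lemma eval_H_succ_ne_zero {n : ℕ} {x : ℝ} (hx : (H n).eval x = 0) : (H (n + 1)).eval x ≠ 0 := by
  induction n with
  | zero => simp [H] at hx
  | succ n ih =>
    have hprev : (H n).eval x ≠ 0 := fun h ↦ ih h hx
    simpa [eval_H_add_two, hx] using ⟨by positivity, hprev⟩

lemma eventually_one_le_eval_H_and_mul_le (n : ℕ) :
    ∀ᶠ x in atTop, 1 ≤ (H n).eval x ∧ x * (H n).eval x ≤ (H (n + 1)).eval x := by
  induction n with
  | zero =>
    filter_upwards [eventually_ge_atTop 0] with x hx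
    simpa [H] using by linarith
  | succ n ih =>
    filter_upwards [ih, eventually_ge_atTop 1, eventually_ge_atTop (2 * (n + 1) : ℝ)]
      with x ⟨hone, hmul⟩ hx1 hxn
    have hsucc : 1 ≤ (H (n + 1)).eval x := (one_le_mul_of_one_le_of_one_le hx1 hone).trans hmul
    refine ⟨hsucc, ?_⟩
    calc x * (H (n + 1)).eval x
        ≤ 2 * x * (H (n + 1)).eval x - x * (H n).eval x := by nlinarith
      _ ≤ 2 * x * (H (n + 1)).eval x - 2 * (n + 1) * (H n).eval x := by gcongr
      _ = (H (n + 1 + 1)).eval x := (eval_H_add_two n x).symm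

lemma eventually_cocompact_eval_H_pos {n : ℕ} (hn : Even n) :
    ∀ᶠ x in cocompact ℝ, 0 < (H n).eval x := by
  have htop : ∀ᶠ x in atTop, 0 < (H n).eval x :=
    (eventually_one_le_eval_H_and_mul_le n).mono fun x hx ↦ one_pos.trans_le hx.1
  rw [cocompact_eq_atBot_atTop, eventually_sup]
  refine ⟨(tendsto_neg_atBot_atTop.eventually htop).mono fun x hx ↦ ?_, htop⟩
  simpa [eval_H_neg, hn.neg_one_pow] using hx

lemma tendsto_eval_H_succ_atTop (n : ℕ) : Tendsto (fun x ↦ (H (n + 1)).eval x) atTop atTop := by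
  refine tendsto_atTop_mono' _ ?_ tendsto_id
  filter_upwards [eventually_one_le_eval_H_and_mul_le n, eventually_ge_atTop 0] with x ⟨h1, h⟩ hx
  exact (le_mul_of_one_le_right hx h1).trans h

lemma tendsto_eval_H_atBot_of_odd {n : ℕ} (hn : Odd n) :
    Tendsto (fun x ↦ (H n).eval x) atBot atBot := by
  obtain ⟨k, rfl⟩ := hn
  refine (tendsto_neg_atTop_atBot.comp
    ((tendsto_eval_H_succ_atTop (2 * k)).comp tendsto_neg_atBot_atTop)).congr fun x ↦ ?_
  simp [eval_H_neg_of_odd (odd_two_mul_add_one k)]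

theorem eventually_isPathConnected_and_regular_H_add_mul_H {n : ℕ} (hn : Odd n) :
    ∀ᶠ ε in 𝓝[>] (0 : ℝ),
      IsPathConnected {p : ℝ × ℝ | 0 < (H n).eval p.1 + ε * (H n).eval p.2} ∧
      ∀ p : ℝ × ℝ, (H n).eval p.1 + ε * (H n).eval p.2 = 0 →
        fderiv ℝ (fun q : ℝ × ℝ ↦ (H n).eval q.1 + ε * (H n).eval q.2) p ≠ 0 := by
  obtain ⟨k, rfl⟩ := hn
  set f : ℝ → ℝ := fun x ↦ (H (2 * k + 1)).eval x
  have hdiff : Differentiable ℝ f := Polynomial.differentiable _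
  have hderiv : deriv f = fun x ↦ 2 * ((2 * k : ℕ) + 1) * (H (2 * k)).eval x :=
    funext (deriv_eval_H_succ (2 * k))
  have hpos : ∀ᶠ x in cocompact ℝ, 0 < deriv f x :=
    (eventually_cocompact_eval_H_pos (even_two_mul k)).mono fun x hx ↦ by
      rw [hderiv]
      positivity
  have hne : ∀ᶠ x in cocompact ℝ, deriv f x ≠ 0 := hpos.mono fun _ ↦ ne_of_gt
  have hreg : ∀ z, deriv f z = 0 → f z ≠ 0 := fun z hz ↦ by
    rw [hderiv] at hz
    exact eval_H_succ_ne_zero ((mul_eq_zero.1 hz).resolve_left (by positivity))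
  obtain ⟨m, hm, hcrit⟩ := exists_pos_le_abs_critical_value hdiff.continuous
    (by rw [hderiv]; fun_prop) hne hreg
  have htop : Tendsto f atTop atTop := tendsto_eval_H_succ_atTop (2 * k)
  have hasc : Ascends f (-m) m := ascends_of_le_abs_critical_value hdiff.continuous hcrit htop
    (tendsto_eval_H_atBot_of_odd (odd_two_mul_add_one k))
  obtain ⟨x₀, hx₀⟩ := (htop.eventually_ge_atTop m).exists
  exact (eventually_isPathConnected_setOf_pos_add_mul hdiff.continuous hm hasc hx₀
    hdiff.continuous hpos htop).and
    (nhdsGT_le_nhdsNE 0 (eventually_fderiv_add_mul_ne_zero hdiff hdiff hm hcrit hne))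

end Hermite

section Eigenfunction

lemma fderiv_fun_mul_of_eq_zero {E : Type*} [NormedAddCommGroup E] [NormedSpace ℝ E] {w f : E → ℝ}
    {p : E} (hw : DifferentiableAt ℝ w p) (hf : DifferentiableAt ℝ f p) (hp : f p = 0) :
    fderiv ℝ (fun q ↦ w q * f q) p = w p • fderiv ℝ f p := by
  simp [fderiv_fun_mul hw hf, hp]

lemma differentiable_Phi (n : ℕ) (θ : ℝ) : Differentiable ℝ (Phi n θ) := by
  unfold Phi
  fun_prop

lemma odd_Phi {n : ℕ} (hn : Odd n) (θ : ℝ) : (Phi n θ).Odd := fun p ↦ by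
  simp only [Phi, Prod.fst_neg, Prod.snd_neg, eval_H_neg_of_odd hn]
  ring_nf

lemma Phi_eq_mul {n : ℕ} {θ : ℝ} (hθ : Real.cos θ ≠ 0) : Phi n θ = fun p ↦
    Real.cos θ * Real.exp (-(p.1 ^ 2 + p.2 ^ 2) / 2) *
      ((H n).eval p.1 + Real.tan θ * (H n).eval p.2) := by
  funext p
  rw [Phi, Real.tan_eq_sin_div_cos]
  field_simp

lemma tendsto_tan_nhdsGT_zero : Tendsto Real.tan (𝓝[>] 0) (𝓝[>] 0) := by
  refine tendsto_nhdsWithin_iff.2 ⟨?_, ?_⟩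
  · have hcont : ContinuousAt Real.tan 0 := Real.continuousAt_tan.2 (by simp)
    simpa using hcont.tendsto.mono_left nhdsWithin_le_nhds
  · filter_upwards [Ioo_mem_nhdsGT Real.pi_div_two_pos] with θ hθ
    exact Real.tan_pos_of_pos_of_lt_pi_div_two hθ.1 hθ.2

theorem eventually_isPathConnected_and_regular_Phi {n : ℕ} (hn : Odd n) :
    ∀ᶠ θ in 𝓝[>] (0 : ℝ), IsPathConnected {p | 0 < Phi n θ p} ∧
      ∀ p, Phi n θ p = 0 → fderiv ℝ (Phi n θ) p ≠ 0 := by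
  filter_upwards [tendsto_tan_nhdsGT_zero.eventually
    (eventually_isPathConnected_and_regular_H_add_mul_H hn),
    Ioo_mem_nhdsGT Real.pi_div_two_pos] with θ ⟨hpc, hreg⟩ hθ
  have hcos : 0 < Real.cos θ := Real.cos_pos_of_mem_Ioo ⟨by linarith [hθ.1, Real.pi_pos], hθ.2⟩
  have hweight (p : ℝ × ℝ) : 0 < Real.cos θ * Real.exp (-(p.1 ^ 2 + p.2 ^ 2) / 2) := by positivity
  rw [Phi_eq_mul hcos.ne']
  refine ⟨by simpa only [mul_pos_iff_of_pos_left (hweight _)] using hpc, fun p hp ↦ ?_⟩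
  replace hp := (mul_eq_zero.1 hp).resolve_left (hweight p).ne'
  rw [fderiv_fun_mul_of_eq_zero
    (f := fun q : ℝ × ℝ ↦ (H n).eval q.1 + Real.tan θ * (H n).eval q.2)
    (by fun_prop) (by fun_prop) hp]
  exact smul_ne_zero (hweight p).ne' (hreg p hp)

end Eigenfunction

open Real Set in
/-- **Theorem 1.2.** For `n` odd there exists `θ_c > 0` such that for all
`0 < θ < θ_c` the nodal set `N(Φ^θ_n)` is a nonempty connected regular curve
(the gradient of `Φ^θ_n` vanishes nowhere on it), and `Φ^θ_n` has exactly two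
nodal domains in `ℝ²`. -/
theorem two_nodal_domains_near_zero (n : ℕ) (hodd : Odd n) (hpos : 0 < n) :
    ∃ θc : ℝ, 0 < θc ∧ ∀ θ : ℝ, 0 < θ → θ < θc →
      (nodalSet n θ).Nonempty ∧
      IsConnected (nodalSet n θ) ∧
      (∀ p ∈ nodalSet n θ, fderiv ℝ (Phi n θ) p ≠ 0) ∧
      numNodalDomains n θ = 2 := by
  obtain ⟨θc, hθc, hsmall⟩ :=
    mem_nhdsGT_iff_exists_Ioo_subset.1 (eventually_isPathConnected_and_regular_Phi hodd)
  refine ⟨θc, hθc, fun θ hθ hθ' ↦ ?_⟩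
  obtain ⟨hpathConn, hreg⟩ := hsmall ⟨hθ, hθ'⟩
  have hcont : Continuous (Phi n θ) := (differentiable_Phi n θ).continuous
  have hposConn : IsConnected {p | 0 < Phi n θ p} := hpathConn.isConnected
  have hnegConn : IsConnected {p | Phi n θ p < 0} :=
    isConnected_setOf_neg_of_odd (odd_Phi hodd θ) hposConn
  have hzeroConn : IsConnected (nodalSet n θ) :=
    isConnected_setOf_eq_zero hcont hposConn hnegConn hreg
  exact ⟨hzeroConn.nonempty, hzeroConn, hreg,
    ncard_connectedComponentIn_ne_zero hcont hposConn hnegConn⟩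
end

section
/- Let n be an odd positive integer and θ ∈ (0,π/4]. For every t ≤ t_{n,1} (the smallest zero of H_n), the function y ↦ Φ^θ_n(t,y) has exactly one zero in the interval [t_{n,n}, ∞), where t_{n,n} is the largest zero of H_n. -/
/-!
Since `H_n` has `n` distinct real zeros, it is a positive multiple of `∏ i, (x - t i)`. To the right
of the largest zero all factors are nonnegative and increasing, so there `H_n` increases from `0` to
`∞` and takes each value `c ≥ 0` exactly once. To the left of the smallest zero all factors are
nonpositive, so `H_n s` has the sign of `(-1) ^ n`. For a fixed `s` the zeros of `y ↦ Φ^θ_n(s, y)`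
are the solutions of `H_n y = -cot θ * H_n s`, and the right-hand side is nonnegative as soon as
`(-1) ^ n * (cos θ * sin θ) ≤ 0`.
-/

section RealRootedPolynomials

open Polynomial Set

variable {R : Type*} [CommRing R]

theorem splits_of_injective_isRoot [IsDomain R] {ι : Type*} [Fintype ι] {p : R[X]} {t : ι → R}
    (ht : Function.Injective t) (hroot : ∀ i, p.IsRoot (t i))
    (hdeg : p.natDegree ≤ Fintype.card ι) : p.Splits := by
  rcases eq_or_ne p 0 with rfl | hp
  · exact Splits.zero
  have hle : Finset.univ.val.map t ≤ p.roots := by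
    rw [Multiset.le_iff_subset (Finset.univ.nodup.map ht)]
    intro x hx
    obtain ⟨i, -, rfl⟩ := Multiset.mem_map.1 hx
    exact (mem_roots hp).2 (hroot i)
  refine splits_iff_card_roots.2 (p.card_roots'.antisymm (hdeg.trans ?_))
  simpa using Multiset.card_le_card hle

variable [LinearOrder R] [IsStrictOrderedRing R]

theorem strictMonoOn_multiset_prod_sub {m : Multiset R} (hm : m ≠ 0) {b : R}
    (hb : ∀ r ∈ m, r ≤ b) : StrictMonoOn (fun x ↦ (m.map (x - ·)).prod) (Ici b) := by
  induction m using Multiset.induction_on with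
  | empty => exact absurd rfl hm
  | cons r m ih =>
    intro x hx y hy hxy
    have hsub : x - r < y - r := sub_lt_sub_right hxy r
    rcases eq_or_ne m 0 with rfl | hm'
    · simpa using hsub
    have hb' : ∀ r' ∈ m, r' ≤ b := fun r' hr' ↦ hb r' (Multiset.mem_cons_of_mem hr')
    have hr : 0 ≤ x - r := sub_nonneg.2 ((hb r (Multiset.mem_cons_self r m)).trans hx)
    have hprod : 0 ≤ (m.map (x - ·)).prod :=
      Multiset.prod_map_nonneg fun r' hr' ↦ sub_nonneg.2 ((hb' r' hr').trans hx)
    simpa only [Multiset.map_cons, Multiset.prod_cons] using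
      mul_lt_mul'' hsub (ih hm' hb' hx hy hxy) hr hprod

theorem strictMonoOn_eval_of_roots_le {p : R[X]} (hp : p.Splits) (hdeg : p.natDegree ≠ 0)
    (hlead : 0 < p.leadingCoeff) {b : R} (hb : ∀ r ∈ p.roots, r ≤ b) :
    StrictMonoOn (fun x ↦ p.eval x) (Ici b) := by
  simp only [hp.eval_eq_prod_roots]
  exact fun x hx y hy hxy ↦ mul_lt_mul_of_pos_left
    (strictMonoOn_multiset_prod_sub (hp.roots_ne_zero hdeg) hb hx hy hxy) hlead

theorem neg_one_pow_natDegree_mul_eval_nonneg {p : R[X]} (hp : p.Splits)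
    (hlead : 0 ≤ p.leadingCoeff) {a : R} (ha : ∀ r ∈ p.roots, a ≤ r) :
    0 ≤ (-1) ^ p.natDegree * p.eval a := by
  have hflip : (-1) ^ p.natDegree * (p.roots.map (a - ·)).prod =
      (p.roots.map (· - a)).prod := by
    simpa [hp.natDegree_eq_card_roots, Function.comp_def] using
      (Multiset.prod_map_neg (p.roots.map (a - ·))).symm
  rw [hp.eval_eq_prod_roots, mul_left_comm, hflip]
  exact mul_nonneg hlead (Multiset.prod_map_nonneg fun r hr ↦ sub_nonneg.2 (ha r hr))

theorem existsUnique_eval_eq_of_isGreatest_root {p : ℝ[X]} (hp : p.Splits)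
    (hlead : 0 < p.leadingCoeff) {b : ℝ} (hb : IsGreatest {x | p.IsRoot x} b) {c : ℝ}
    (hc : 0 ≤ c) : ∃! y, y ∈ Ici b ∧ p.eval y = c := by
  have hp0 : p ≠ 0 := leadingCoeff_ne_zero.1 hlead.ne'
  have hdeg : 0 < p.degree := degree_pos_of_root hp0 hb.1
  have hmono := strictMonoOn_eval_of_roots_le hp (natDegree_pos_iff_degree_pos.2 hdeg).ne' hlead
    fun r hr ↦ hb.2 (isRoot_of_mem_roots hr)
  have hsurj : Ici (p.eval b) ⊆ (fun x ↦ p.eval x) '' Ici b := intermediate_value_Ici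
    p.continuousOn (p.tendsto_atTop_of_leadingCoeff_nonneg hdeg hlead.le)
  obtain ⟨y, hy, rfl⟩ := hsurj (show p.eval b ≤ c from hb.1.le.trans hc)
  exact ⟨y, ⟨hy, rfl⟩, fun z hz ↦ hmono.injOn hz.1 hy hz.2⟩

theorem existsUnique_mul_eval_add_mul_eval_eq_zero {p : ℝ[X]} (hp : p.Splits)
    (hlead : 0 < p.leadingCoeff) {a b : ℝ} (ha : IsLeast {x | p.IsRoot x} a)
    (hb : IsGreatest {x | p.IsRoot x} b) {α β : ℝ} (hβ : β ≠ 0)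
    (hsign : (-1) ^ p.natDegree * (α * β) ≤ 0) {s : ℝ} (hs : s ≤ a) :
    ∃! y, y ∈ Ici b ∧ α * p.eval s + β * p.eval y = 0 := by
  have heval : 0 ≤ (-1) ^ p.natDegree * p.eval s :=
    neg_one_pow_natDegree_mul_eval_nonneg hp hlead.le
      fun r hr ↦ hs.trans (ha.2 (isRoot_of_mem_roots hr))
  have hmul : α * β * p.eval s ≤ 0 := by
    have hsq : ((-1 : ℝ) ^ p.natDegree) * (-1) ^ p.natDegree = 1 := by
      rw [← mul_pow, neg_one_mul, neg_neg, one_pow]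
    calc α * β * p.eval s
        = (-1) ^ p.natDegree * (α * β) * ((-1) ^ p.natDegree * p.eval s) := by
          linear_combination (-(α * β * p.eval s)) * hsq
      _ ≤ 0 := mul_nonpos_of_nonpos_of_nonneg hsign heval
  have hlevel : 0 ≤ -(α * p.eval s) / β := by
    rw [← mul_div_mul_right _ _ hβ]
    exact div_nonneg (by linarith) (mul_self_nonneg β)
  have hsolve : ∀ y, α * p.eval s + β * p.eval y = 0 ↔ p.eval y = -(α * p.eval s) / β := by
    intro y
    rw [eq_div_iff hβ, mul_comm (p.eval y), add_comm, add_eq_zero_iff_eq_neg]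
  simpa only [hsolve] using existsUnique_eval_eq_of_isGreatest_root hp hlead hb hlevel

end RealRootedPolynomials

section Hermite

open Polynomial

theorem natDegree_H_le : ∀ n, (H n).natDegree ≤ n
  | 0 => by simp [H]
  | 1 => by rw [H]; compute_degree
  | n + 2 => by
    have h₀ := natDegree_H_le n
    have h₁ := natDegree_H_le (n + 1)
    rw [H]
    compute_degree
    lia

theorem coeff_H_self : ∀ n, (H n).coeff n = 2 ^ n
  | 0 => by simp [H]
  | 1 => by simp [H]
  | n + 2 => by
    have hlow : (H n).coeff (n + 2) = 0 :=
      coeff_eq_zero_of_natDegree_lt ((natDegree_H_le n).trans_lt (by lia))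
    rw [H, coeff_sub, mul_assoc, coeff_C_mul, coeff_X_mul, coeff_C_mul, hlow, coeff_H_self (n + 1)]
    ring

theorem natDegree_H (n : ℕ) : (H n).natDegree = n :=
  (natDegree_H_le n).antisymm (le_natDegree_of_ne_zero (by simp [coeff_H_self]))

theorem leadingCoeff_H (n : ℕ) : (H n).leadingCoeff = 2 ^ n := by
  rw [leadingCoeff, natDegree_H, coeff_H_self]

end Hermite

theorem Phi_eq_zero_iff (n : ℕ) (θ x y : ℝ) :
    Phi n θ (x, y) = 0 ↔ Real.cos θ * (H n).eval x + Real.sin θ * (H n).eval y = 0 := by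
  simp [Phi, Real.exp_ne_zero]

open Real Set in
theorem barrier_vertical_exactly_one_zero_above_general (n : ℕ) (hpos : 0 < n)
    (θ : ℝ) (hsin : sin θ ≠ 0) (hsign : (-1) ^ n * (cos θ * sin θ) ≤ 0)
    (t : Fin n → ℝ) (htmono : StrictMono t)
    (htzero : ∀ x : ℝ, (H n).eval x = 0 ↔ ∃ i, x = t i)
    (s : ℝ) (hs : s ≤ t ⟨0, hpos⟩) :
    ∃! y : ℝ, y ∈ Ici (t ⟨n - 1, by lia⟩) ∧ Phi n θ (s, y) = 0 := by
  have hroots : {x | (H n).IsRoot x} = range t :=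
    Set.ext fun x ↦ (htzero x).trans (exists_congr fun _ ↦ eq_comm)
  have hsplits : (H n).Splits :=
    splits_of_injective_isRoot htmono.injective (fun i ↦ (htzero _).2 ⟨i, rfl⟩)
      (by simp [natDegree_H])
  have hleast : IsLeast {x | (H n).IsRoot x} (t ⟨0, hpos⟩) := by
    rw [hroots]
    exact ⟨mem_range_self _, forall_mem_range.2 fun i ↦ htmono.monotone (Nat.zero_le i)⟩
  have hgreatest : IsGreatest {x | (H n).IsRoot x} (t ⟨n - 1, by lia⟩) := by
    rw [hroots]
    exact ⟨mem_range_self _, forall_mem_range.2 fun i ↦ htmono.monotone (Nat.le_sub_one_of_lt i.2)⟩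
  simpa only [Phi_eq_zero_iff] using
    existsUnique_mul_eval_add_mul_eval_eq_zero hsplits (by simp [leadingCoeff_H]) hleast hgreatest
      hsin (by rwa [natDegree_H]) hs

open Real Set in
/-- **Lemma 3.2 (1).** Let `n` be odd, `θ ∈ (0,π/4]`, and let `t 0 < ⋯ < t (n-1)`
enumerate the `n` zeros of `H_n`. For every `s ≤ t_{n,1}` (the smallest zero), the
function `y ↦ Φ^θ_n(s,y)` has exactly one zero in `[t_{n,n}, ∞)` (where `t_{n,n}` is
the largest zero). -/
theorem barrier_vertical_exactly_one_zero_above (n : ℕ) (hodd : Odd n) (hpos : 0 < n)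
    (θ : ℝ) (hθ : θ ∈ Set.Ioc 0 (π / 4))
    (t : Fin n → ℝ) (htmono : StrictMono t)
    (htzero : ∀ x : ℝ, (H n).eval x = 0 ↔ ∃ i, x = t i)
    (s : ℝ) (hs : s ≤ t ⟨0, hpos⟩) :
    ∃! y : ℝ, y ∈ Set.Ici (t ⟨n - 1, by omega⟩) ∧ Phi n θ (s, y) = 0 := by
  have hsin : 0 < sin θ := sin_pos_of_pos_of_lt_pi hθ.1 (by linarith [hθ.2, pi_pos])
  have hcos : 0 ≤ cos θ := cos_nonneg_of_neg_pi_div_two_le_of_le (by linarith [hθ.1, pi_pos])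
    (by linarith [hθ.2, pi_pos])
  exact barrier_vertical_exactly_one_zero_above_general n hpos θ hsin.ne'
    (by simpa [hodd.neg_one_pow] using mul_nonneg hcos hsin.le) t htmono htzero s hs
end
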